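/- Hausdorff–Young–Paley inequality on ℝⁿ: Let 1 < p ≤ b ≤ p' < ∞ (where 1/p + 1/p' = 1) and let φ : ℝⁿ → (0,∞) be measurable with M_φ := sup_{s>0} s · |{ξ : φ(ξ) ≥ s}| < ∞. Then for all f ∈ L^p(ℝⁿ), ( ∫_{ℝⁿ} ( |f̂(ξ)| φ(ξ)^{1/b − 1/p'} )^b dξ )^{1/b} ≲ M_φ^{1/b − 1/p'} ‖f‖_{L^p(ℝⁿ)}. -/

import Mathlib

open MeasureTheory Set SchwartzMap
open scoped ENNReal FourierTransform
open scoped NNReal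

/-!
Two estimates are interpolated by Hölder's inequality. The first is Paley's: for a weight `φ`, the
sublinear map `f ↦ |𝓕 f| / φ` is of weak type `(1, 1)` and `(2, 2)` from Lebesgue measure to
`φ ^ 2 dξ`, because `∫_{φ < B} φ ^ 2 ≤ 2 M_φ B` and by Plancherel, so for `1 < p < 2` the
Marcinkiewicz argument gives `∫ |𝓕 f| ^ p φ ^ (2 - p) ≲ M_φ ^ (2 - p) ‖f‖_p ^ p`. The second,
Hausdorff–Young, is Paley's inequality with the weight `φ = |𝓕 f| ^ q`, whose weak `L¹` norm is at
most its integral; truncating the weight allows this integral to be cancelled.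
-/

section Marcinkiewicz

variable {α β : Type*} [MeasurableSpace α] [MeasurableSpace β] {μ : Measure α} {ν : Measure β}
  {f : α → ℝ≥0} {r s : ℝ}

theorem lintegral_coe_rpow_eq_lintegral_meas_lt_mul (hf : AEMeasurable f μ) (hr : 0 < r) :
    ∫⁻ x, (f x : ℝ≥0∞) ^ r ∂μ =
      ENNReal.ofReal r * ∫⁻ t in Ioi (0 : ℝ), μ {x | t < f x} * ENNReal.ofReal (t ^ (r - 1)) := by
  rw [← lintegral_rpow_eq_lintegral_meas_lt_mul μ (ae_of_all _ fun x ↦ (f x).coe_nonneg)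
    hf.coe_nnreal_real hr]
  refine lintegral_congr fun x ↦ ?_
  rw [← ENNReal.ofReal_rpow_of_nonneg (f x).coe_nonneg hr.le, ENNReal.ofReal_coe_nnreal]

/-- Up to the factor `r`, this is the layer cake formula for the measure `f ^ s ∂μ`. -/
theorem lintegral_setLIntegral_lt_mul_rpow (hf : AEMeasurable f μ) (hr : 0 < r) (hs : 0 < s + r) :
    ∫⁻ t in Ioi (0 : ℝ), (∫⁻ x in {x | t < f x}, (f x : ℝ≥0∞) ^ s ∂μ) *
        ENNReal.ofReal (t ^ (r - 1)) =
      (ENNReal.ofReal r)⁻¹ * ∫⁻ x, (f x : ℝ≥0∞) ^ (s + r) ∂μ := by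
  have hfs : AEMeasurable (fun x ↦ (f x : ℝ≥0∞) ^ s) μ := hf.coe_nnreal_ennreal.pow_const s
  have hfr : AEMeasurable (fun x ↦ (f x : ℝ≥0∞) ^ r) μ := hf.coe_nnreal_ennreal.pow_const r
  have hmul (x : α) : (f x : ℝ≥0∞) ^ s * (f x : ℝ≥0∞) ^ r = (f x : ℝ≥0∞) ^ (s + r) := by
    rcases eq_or_ne (f x) 0 with hx | hx
    · simp [hx, hr, hs]
    · rw [ENNReal.rpow_add _ _ (by simpa using hx) ENNReal.coe_ne_top]
  have hlayer := lintegral_coe_rpow_eq_lintegral_meas_lt_mul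
    (hf.mono_ac (withDensity_absolutelyContinuous μ fun x ↦ (f x : ℝ≥0∞) ^ s)) hr
  rw [lintegral_withDensity_eq_lintegral_mul₀ hfs hfr] at hlayer
  simp only [Pi.mul_apply, hmul] at hlayer
  rw [hlayer, ENNReal.inv_mul_cancel_left (by simpa using hr) ENNReal.ofReal_ne_top]
  refine lintegral_congr fun t ↦ ?_
  rw [withDensity_apply₀ _ (nullMeasurableSet_lt aemeasurable_const hf.coe_nnreal_real)]

theorem lintegral_Ioc_ofReal_rpow (a : ℝ≥0) (hr : 0 < r) :
    ∫⁻ t in Ioc 0 (a : ℝ), ENNReal.ofReal (t ^ (r - 1)) =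
      (ENNReal.ofReal r)⁻¹ * (a : ℝ≥0∞) ^ r := by
  rw [← ofReal_integral_eq_lintegral_ofReal
      ((intervalIntegrable_iff_integrableOn_Ioc_of_le a.coe_nonneg).1
        (intervalIntegral.intervalIntegrable_rpow' (by linarith)))
      ((ae_restrict_iff' measurableSet_Ioc).2 (ae_of_all _ fun t ht ↦ Real.rpow_nonneg ht.1.le _)),
    ← intervalIntegral.integral_of_le a.coe_nonneg, integral_rpow (Or.inl (by linarith)),
    sub_add_cancel, Real.zero_rpow hr.ne', sub_zero, ENNReal.ofReal_div_of_pos hr,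
    ← ENNReal.ofReal_rpow_of_nonneg a.coe_nonneg hr.le, ENNReal.ofReal_coe_nnreal,
    ENNReal.div_eq_inv_mul]

theorem lintegral_Ici_ofReal_rpow {a : ℝ} (ha : 0 < a) (hr : 0 < r) :
    ∫⁻ t in Ici a, ENNReal.ofReal (t ^ (-r - 1)) =
      (ENNReal.ofReal r)⁻¹ * ENNReal.ofReal a ^ (-r) := by
  rw [setLIntegral_congr Ioi_ae_eq_Ici.symm,
    ← ofReal_integral_eq_lintegral_ofReal (integrableOn_Ioi_rpow_of_lt (by linarith) ha)
      ((ae_restrict_iff' measurableSet_Ioi).2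
        (ae_of_all _ fun t ht ↦ Real.rpow_nonneg (ha.trans ht).le _)),
    integral_Ioi_rpow_of_lt (by linarith) ha, ENNReal.ofReal_rpow_of_pos ha,
    ← ENNReal.ofReal_inv_of_pos hr, ← ENNReal.ofReal_mul (by positivity)]
  congr 1
  simp only [sub_add_cancel]
  field_simp

theorem lintegral_setLIntegral_le_mul_rpow [SFinite μ] (hf : AEMeasurable f μ) (hr : 0 < r)
    (hrs : r < s) :
    ∫⁻ t in Ioi (0 : ℝ), (∫⁻ x in {x | f x ≤ t}, (f x : ℝ≥0∞) ^ s ∂μ) *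
        ENNReal.ofReal (t ^ (-r - 1)) =
      (ENNReal.ofReal r)⁻¹ * ∫⁻ x, (f x : ℝ≥0∞) ^ (s - r) ∂μ := by
  have hmeas : AEMeasurable (Function.uncurry fun (t : ℝ) (x : α) ↦
      {y : α | f y ≤ t}.indicator (fun y ↦ (f y : ℝ≥0∞) ^ s * ENNReal.ofReal (t ^ (-r - 1))) x)
      ((volume.restrict (Ioi 0)).prod μ) := by
    have hfst : AEMeasurable Prod.fst ((volume.restrict (Ioi (0 : ℝ))).prod μ) :=
      measurable_fst.aemeasurable
    have hsnd : AEMeasurable (fun z : ℝ × α ↦ f z.2) ((volume.restrict (Ioi (0 : ℝ))).prod μ) :=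
      hf.comp_snd
    exact ((hsnd.coe_nnreal_ennreal.pow_const s).mul
      (hfst.pow_const _).ennreal_ofReal).indicator₀
        (nullMeasurableSet_le hsnd.coe_nnreal_real hfst)
  calc
    _ = ∫⁻ t in Ioi (0 : ℝ), ∫⁻ x, {y : α | f y ≤ t}.indicator
          (fun y ↦ (f y : ℝ≥0∞) ^ s * ENNReal.ofReal (t ^ (-r - 1))) x ∂μ := by
      refine lintegral_congr fun t ↦ ?_
      rw [lintegral_indicator₀ (nullMeasurableSet_le hf.coe_nnreal_real aemeasurable_const),
        lintegral_mul_const' _ _ ENNReal.ofReal_ne_top]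
    _ = ∫⁻ x, (∫⁻ t in Ioi (0 : ℝ), (Ici (f x : ℝ)).indicator
          (fun t ↦ (f x : ℝ≥0∞) ^ s * ENNReal.ofReal (t ^ (-r - 1))) t) ∂μ :=
      lintegral_lintegral_swap hmeas
    _ = ∫⁻ x, (ENNReal.ofReal r)⁻¹ * (f x : ℝ≥0∞) ^ (s - r) ∂μ := by
      refine lintegral_congr fun x ↦ ?_
      rcases eq_zero_or_pos (f x) with hx | hx
      · simp [hx, hr.trans hrs, sub_pos.2 hrs]
      · have hx' : (f x : ℝ≥0∞) ≠ 0 := by simpa using hx.ne'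
        rw [setLIntegral_indicator measurableSet_Ici,
          inter_eq_left.2 (Ici_subset_Ioi.2 (NNReal.coe_pos.2 hx)),
          lintegral_const_mul _ (by fun_prop), lintegral_Ici_ofReal_rpow (NNReal.coe_pos.2 hx) hr,
          ENNReal.ofReal_coe_nnreal, mul_left_comm,
          ← ENNReal.rpow_add _ _ hx' ENNReal.coe_ne_top, sub_eq_add_neg]
    _ = _ := lintegral_const_mul' _ _ (by simpa using hr)

/-- The real-interpolation step of the Marcinkiewicz theorem: `F` plays the role of `T f`, and its
distribution function at height `t` is estimated by applying weak type `(p₀, p₀)` to the part of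
`f` above `t` and weak type `(p₁, p₁)` to the part below `t`. -/
theorem lintegral_rpow_le_of_meas_lt_le [SFinite μ] (hf : AEMeasurable f μ) {F : β → ℝ≥0}
    (hF : AEMeasurable F ν) {p₀ p p₁ : ℝ} (hp : 0 < p) (hp₀ : p₀ < p) (hp₁ : p < p₁) {A B : ℝ≥0∞}
    (hA : A ≠ ∞) (hB : B ≠ ∞)
    (hdistr : ∀ t : ℝ≥0, 0 < t → ν {y | t < F y} ≤
      A * (t : ℝ≥0∞) ^ (-p₀) * ∫⁻ x in {x | t < f x}, (f x : ℝ≥0∞) ^ p₀ ∂μ +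
      B * (t : ℝ≥0∞) ^ (-p₁) * ∫⁻ x in {x | f x ≤ t}, (f x : ℝ≥0∞) ^ p₁ ∂μ) :
    ∫⁻ y, (F y : ℝ≥0∞) ^ p ∂ν ≤
      ENNReal.ofReal p * (A / ENNReal.ofReal (p - p₀) + B / ENNReal.ofReal (p₁ - p)) *
        ∫⁻ x, (f x : ℝ≥0∞) ^ p ∂μ := by
  set high : ℝ → ℝ≥0∞ := fun t ↦ ∫⁻ x in {x | t < f x}, (f x : ℝ≥0∞) ^ p₀ ∂μ
  set low : ℝ → ℝ≥0∞ := fun t ↦ ∫⁻ x in {x | f x ≤ t}, (f x : ℝ≥0∞) ^ p₁ ∂μ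
  have hhigh_meas : Measurable high :=
    Antitone.measurable fun t u htu ↦ lintegral_mono_set fun x hx ↦ htu.trans_lt hx
  have hhigh := lintegral_setLIntegral_lt_mul_rpow hf (sub_pos.2 hp₀) (s := p₀) (by linarith)
  have hlow := lintegral_setLIntegral_le_mul_rpow hf (sub_pos.2 hp₁) (s := p₁) (by linarith)
  rw [add_sub_cancel] at hhigh
  rw [sub_sub_cancel] at hlow
  rw [lintegral_coe_rpow_eq_lintegral_meas_lt_mul hF hp, mul_assoc]
  gcongr
  calc
    _ ≤ ∫⁻ t in Ioi (0 : ℝ), (A * (high t * ENNReal.ofReal (t ^ (p - p₀ - 1))) +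
          B * (low t * ENNReal.ofReal (t ^ (-(p₁ - p) - 1)))) := by
      refine setLIntegral_mono' measurableSet_Ioi fun t ht ↦ ?_
      lift t to ℝ≥0 using le_of_lt ht
      have hpow (q : ℝ) : (t : ℝ≥0∞) ^ (-q) * ENNReal.ofReal (t ^ (p - 1)) =
          ENNReal.ofReal (t ^ (p - q - 1)) := by
        rw [← ENNReal.ofReal_coe_nnreal, ENNReal.ofReal_rpow_of_pos ht,
          ← ENNReal.ofReal_mul (Real.rpow_nonneg t.coe_nonneg _), ← Real.rpow_add ht]
        ring_nf
      refine (mul_le_mul_left (hdistr t ht) _).trans_eq ?_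
      simp only [high, low, NNReal.coe_lt_coe, NNReal.coe_le_coe]
      rw [neg_sub, ← hpow, ← hpow]
      ring
    _ = A * ((ENNReal.ofReal (p - p₀))⁻¹ * ∫⁻ x, (f x : ℝ≥0∞) ^ p ∂μ) +
          B * ((ENNReal.ofReal (p₁ - p))⁻¹ * ∫⁻ x, (f x : ℝ≥0∞) ^ p ∂μ) := by
      rw [lintegral_add_left (by fun_prop), lintegral_const_mul' _ _ hA,
        lintegral_const_mul' _ _ hB, hhigh, hlow]
    _ = _ := by
      simp only [div_eq_mul_inv]
      ring

end Marcinkiewicz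

section WeakL1

variable {α : Type*} [MeasurableSpace α] {μ : Measure α} {φ : α → ℝ≥0}

/-- The weak `L¹` quasinorm `M_φ = sup_{s>0} s · μ {φ ≥ s}` of a nonnegative function. -/
noncomputable def weakL1Norm (μ : Measure α) (φ : α → ℝ≥0) : ℝ≥0∞ :=
  ⨆ s : ℝ≥0, s * μ {x | s ≤ φ x}

theorem mul_meas_ge_le_weakL1Norm (s : ℝ≥0) : s * μ {x | s ≤ φ x} ≤ weakL1Norm μ φ :=
  le_iSup (fun s : ℝ≥0 ↦ s * μ {x | s ≤ φ x}) s

theorem weakL1Norm_le_lintegral (hφ : AEMeasurable φ μ) :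
    weakL1Norm μ φ ≤ ∫⁻ x, φ x ∂μ :=
  iSup_le fun s ↦ by simpa using mul_meas_ge_le_lintegral₀ hφ.coe_nnreal_ennreal s

theorem ae_eq_zero_of_weakL1Norm_eq_zero (h : weakL1Norm μ φ = 0) : φ =ᵐ[μ] 0 := by
  have hle : ∀ᵐ x ∂μ, φ x ≤ 0 := by
    refine ae_le_const_iff_forall_gt_measure_zero φ 0 |>.2 fun s hs ↦ ?_
    have hs' := (mul_meas_ge_le_weakL1Norm (μ := μ) (φ := φ) s).trans_eq h
    simpa [hs.ne'] using hs'
  filter_upwards [hle] with x hx using nonpos_iff_eq_zero.1 hx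

theorem setLIntegral_rpow_lt_le_weakL1Norm (hφ : AEMeasurable φ μ) {r : ℝ} (hr : 1 < r)
    (B : ℝ≥0) :
    ∫⁻ x in {x | φ x < B}, (φ x : ℝ≥0∞) ^ r ∂μ ≤
      ENNReal.ofReal (r / (r - 1)) * weakL1Norm μ φ * (B : ℝ≥0∞) ^ (r - 1) := by
  have hr₁ : 0 < r - 1 := sub_pos.2 hr
  have hlayer (t : ℝ) (ht : t ∈ Ioi 0) :
      μ.restrict {x | φ x < B} {x | t < φ x} * ENNReal.ofReal (t ^ (r - 1)) ≤
        (Ioc 0 (B : ℝ)).indicator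
          (fun t ↦ weakL1Norm μ φ * ENNReal.ofReal (t ^ (r - 1 - 1))) t := by
    have ht : 0 < t := ht
    rw [Measure.restrict_apply₀' (nullMeasurableSet_lt hφ aemeasurable_const)]
    rcases le_or_gt t B with htB | hBt
    · rw [indicator_of_mem (mem_Ioc.2 ⟨ht, htB⟩), ← add_sub_cancel 1 (r - 1),
        Real.rpow_add ht, Real.rpow_one, ENNReal.ofReal_mul ht.le, ← mul_assoc, mul_comm (μ _),
        add_sub_cancel]
      gcongr
      refine le_trans ?_ (mul_meas_ge_le_weakL1Norm t.toNNReal)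
      refine mul_le_mul_right (measure_mono fun x hx ↦ ?_) _
      exact Real.toNNReal_le_iff_le_coe.2 (le_of_lt hx.1)
    · have hempty : {x | t < φ x} ∩ {x | φ x < B} = ∅ :=
        eq_empty_of_forall_notMem fun x hx ↦
          hBt.not_ge (hx.1.le.trans (NNReal.coe_le_coe.2 (le_of_lt hx.2)))
      simp [hempty]
  rw [lintegral_coe_rpow_eq_lintegral_meas_lt_mul hφ.restrict (by linarith)]
  calc
    _ ≤ ENNReal.ofReal r * ∫⁻ t in Ioi (0 : ℝ), (Ioc 0 (B : ℝ)).indicator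
          (fun t ↦ weakL1Norm μ φ * ENNReal.ofReal (t ^ (r - 1 - 1))) t :=
      mul_le_mul_right (setLIntegral_mono' measurableSet_Ioi hlayer) _
    _ = ENNReal.ofReal r * (weakL1Norm μ φ *
          ((ENNReal.ofReal (r - 1))⁻¹ * (B : ℝ≥0∞) ^ (r - 1))) := by
      rw [setLIntegral_indicator measurableSet_Ioc, inter_eq_left.2 fun t ht ↦ ht.1,
        lintegral_const_mul _ (by fun_prop), lintegral_Ioc_ofReal_rpow B hr₁]
    _ = _ := by
      rw [ENNReal.ofReal_div_of_pos hr₁, div_eq_mul_inv]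
      ring

/-- Testing with simple functions `φ ≤ G` of finite integral lets the factor `(∫ φ) ^ (1 - r)` be
cancelled. -/
theorem lintegral_rpow_le_of_forall_weakL1Norm [SigmaFinite μ] {G : α → ℝ≥0} {r : ℝ} (hr₀ : 0 < r)
    (hr₁ : r ≤ 1) {C : ℝ≥0∞}
    (hC : ∀ φ : α → ℝ≥0, Measurable φ → weakL1Norm μ φ ≠ ∞ →
      ∫⁻ x, (G x : ℝ≥0∞) ^ r * (φ x : ℝ≥0∞) ^ (1 - r) ∂μ ≤ C * weakL1Norm μ φ ^ (1 - r)) :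
    (∫⁻ x, G x ∂μ) ^ r ≤ C := by
  refine (ENNReal.le_rpow_inv_iff hr₀).1 (le_of_forall_lt_imp_le_of_dense fun c hc ↦ ?_)
  obtain ⟨h, hhG, hfin, hch⟩ := exists_lt_lintegral_simpleFunc_of_lt_lintegral hc
  refine hch.le.trans ((ENNReal.le_rpow_inv_iff hr₀).2 ?_)
  have hweak : weakL1Norm μ h ≤ ∫⁻ x, h x ∂μ := weakL1Norm_le_lintegral h.measurable.aemeasurable
  have hne : ∫⁻ x, h x ∂μ ≠ 0 := (pos_of_gt hch).ne'
  refine (ENNReal.mul_le_mul_iff_left (c := (∫⁻ x, h x ∂μ) ^ (1 - r))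
    (by simp [hne, hfin.ne]) (by finiteness)).1 ?_
  calc
    _ = ∫⁻ x, (h x : ℝ≥0∞) ^ r * (h x : ℝ≥0∞) ^ (1 - r) ∂μ := by
      rw [← ENNReal.rpow_add _ _ hne hfin.ne, add_sub_cancel, ENNReal.rpow_one]
      refine lintegral_congr fun x ↦ ?_
      rw [← ENNReal.rpow_add_of_nonneg _ _ hr₀.le (sub_nonneg.2 hr₁), add_sub_cancel,
        ENNReal.rpow_one]
    _ ≤ ∫⁻ x, (G x : ℝ≥0∞) ^ r * (h x : ℝ≥0∞) ^ (1 - r) ∂μ := by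
      gcongr with x
      exact hhG x
    _ ≤ C * weakL1Norm μ h ^ (1 - r) := hC h h.measurable (hweak.trans_lt hfin).ne
    _ ≤ C * (∫⁻ x, h x ∂μ) ^ (1 - r) := by
      gcongr

theorem withDensity_rpow_mul_lt_le_weakL1Norm (hφ : AEMeasurable φ μ) {r : ℝ} (hr : 1 < r)
    {G : α → ℝ≥0} {c D : ℝ≥0} (hc : 0 < c) (hG : ∀ x, G x ≤ D) :
    μ.withDensity (fun x ↦ (φ x : ℝ≥0∞) ^ r) {x | c * φ x < G x} ≤
      ENNReal.ofReal (r / (r - 1)) * weakL1Norm μ φ * ((D / c : ℝ≥0) : ℝ≥0∞) ^ (r - 1) := by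
  have hlt : NullMeasurableSet {x | φ x < D / c} μ :=
    nullMeasurableSet_lt hφ aemeasurable_const
  calc
    _ ≤ μ.withDensity (fun x ↦ (φ x : ℝ≥0∞) ^ r) {x | φ x < D / c} :=
      measure_mono fun x hx ↦ (lt_div_iff₀' hc).2 (lt_of_lt_of_le hx (hG x))
    _ = ∫⁻ x in {x | φ x < D / c}, (φ x : ℝ≥0∞) ^ r ∂μ := withDensity_apply₀ _ hlt
    _ ≤ _ := setLIntegral_rpow_lt_le_weakL1Norm hφ hr _

theorem withDensity_rpow_mul_lt_le_lintegral (hφ : AEMeasurable φ μ) {r : ℝ} (hr : 0 ≤ r)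
    {G : α → ℝ≥0} (hG : AEMeasurable G μ) {c : ℝ≥0} (hc : 0 < c) :
    μ.withDensity (fun x ↦ (φ x : ℝ≥0∞) ^ r) {x | c * φ x < G x} ≤
      (c : ℝ≥0∞)⁻¹ ^ r * ∫⁻ x, (G x : ℝ≥0∞) ^ r ∂μ := by
  have hlt : NullMeasurableSet {x | c * φ x < G x} μ :=
    nullMeasurableSet_lt (hφ.const_mul c) hG
  rw [withDensity_apply₀ _ hlt]
  calc
    _ ≤ ∫⁻ x in {x | c * φ x < G x}, (c : ℝ≥0∞)⁻¹ ^ r * (G x : ℝ≥0∞) ^ r ∂μ := by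
      refine lintegral_mono_ae ((ae_restrict_iff'₀ hlt).2 (ae_of_all _ fun x hx ↦ ?_))
      rw [← ENNReal.mul_rpow_of_nonneg _ _ hr]
      gcongr
      rw [← ENNReal.coe_inv hc.ne', ← ENNReal.coe_mul, ENNReal.coe_le_coe, le_inv_mul_iff₀ hc]
      exact le_of_lt hx
    _ ≤ (c : ℝ≥0∞)⁻¹ ^ r * ∫⁻ x, (G x : ℝ≥0∞) ^ r ∂μ := by
      rw [lintegral_const_mul' _ _ (by finiteness)]
      gcongr
      exact Measure.restrict_le_self

end WeakL1

section Exponents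

variable {α : Type*} [MeasurableSpace α] {μ : Measure α} {p q b : ℝ}

theorem lintegral_enorm_rpow_eq_eLpNorm_rpow {E : Type*} [ENorm E] (f : α → E) (hp : 0 < p) :
    ∫⁻ x, ‖f x‖ₑ ^ p ∂μ = eLpNorm f (ENNReal.ofReal p) μ ^ p := by
  lift p to ℝ≥0 using hp.le
  rw [ENNReal.ofReal_coe_nnreal, eLpNorm_nnreal_pow_eq_lintegral (by exact_mod_cast hp.ne')]

theorem lintegral_mul_rpow_rpow_le {F w : α → ℝ≥0∞} (hF : AEMeasurable F μ)
    (hw : AEMeasurable w μ) {d e θ η : ℝ} (hp : 0 ≤ p) (hq : 0 ≤ q) (hθ : 0 ≤ θ) (hη : 0 ≤ η)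
    (hθη : θ + η = 1) (hb : p * θ + q * η = b) (hd : d * θ = e * b) :
    ∫⁻ x, (F x * w x ^ e) ^ b ∂μ ≤
      (∫⁻ x, F x ^ p * w x ^ d ∂μ) ^ θ * (∫⁻ x, F x ^ q ∂μ) ^ η := by
  have hb₀ : 0 ≤ b := hb ▸ by positivity
  refine le_of_eq_of_le (lintegral_congr fun x ↦ ?_) (ENNReal.lintegral_mul_norm_pow_le
    ((hF.pow_const p).mul (hw.pow_const d)) (hF.pow_const q) hθ hη hθη)
  simp only [Pi.mul_apply]
  rw [ENNReal.mul_rpow_of_nonneg _ _ hb₀, ENNReal.mul_rpow_of_nonneg _ _ hθ, ← ENNReal.rpow_mul,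
    ← ENNReal.rpow_mul, ← ENNReal.rpow_mul, ← ENNReal.rpow_mul, hd, ← hb,
    ENNReal.rpow_add_of_nonneg _ _ (by positivity) (by positivity), mul_right_comm]

theorem le_two_of_holderConjugate_of_le (hpq : p.HolderConjugate q) (h : p ≤ q) : p ≤ 2 := by
  have hdiv : p / q ≤ 1 := div_le_one_of_le₀ h hpq.symm.nonneg
  linarith [hpq.div_conj_eq_sub_one]

theorem exists_interpolation_exponents (hpq : p.HolderConjugate q) (hpb : p ≤ b) (hbq : b ≤ q) :
    ∃ θ η : ℝ, 0 ≤ θ ∧ 0 ≤ η ∧ θ + η = 1 ∧ p * θ + q * η = b ∧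
      (2 - p) * θ = (1 / b - 1 / q) * b := by
  obtain ⟨θ, η, hθ, hη, hθη, hb⟩ : b ∈ segment ℝ p q := by
    rw [segment_eq_Icc (hpb.trans hbq)]
    exact ⟨hpb, hbq⟩
  simp only [smul_eq_mul] at hb
  refine ⟨θ, η, hθ, hη, hθη, by linarith, ?_⟩
  have hb₀ : b ≠ 0 := (hpq.pos.trans_le hpb).ne'
  have hq₀ := hpq.symm.ne_zero
  have hmul := hpq.mul_eq_add
  field_simp
  have hη' : η = 1 - θ := by linarith
  subst hη'
  rw [← hb]
  linear_combination (-θ) * hmul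

end Exponents

section Fourier

variable {V H : Type*} [NormedAddCommGroup V] [InnerProductSpace ℝ V] [FiniteDimensional ℝ V]
  [MeasurableSpace V] [BorelSpace V] [NormedAddCommGroup H] {f g : V → H} {φ : V → ℝ≥0}

section NormedSpace

variable [NormedSpace ℂ H]

theorem continuous_fourier_of_integrable (hf : Integrable f) : Continuous (𝓕 f) :=
  VectorFourier.fourierIntegral_continuous Real.continuous_fourierChar
    (innerSL ℝ).continuous₂ hf

theorem fourier_add_apply (hf : Integrable f) (hg : Integrable g) (ξ : V) :
    𝓕 (f + g) ξ = 𝓕 f ξ + 𝓕 g ξ :=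
  congrFun (VectorFourier.fourierIntegral_add Real.continuous_fourierChar
    (innerSL ℝ).continuous₂ hf hg) ξ

theorem enorm_fourier_le_lintegral_enorm (f : V → H) (ξ : V) : ‖𝓕 f ξ‖ₑ ≤ ∫⁻ x, ‖f x‖ₑ := by
  rw [Real.fourier_eq]
  refine (enorm_integral_le_lintegral_enorm _).trans_eq (lintegral_congr fun x ↦ ?_)
  rw [← ofReal_norm, ← ofReal_norm, Circle.norm_smul]

theorem lt_fourier_indicator_of_lt_div {A : Set V} (hA : NullMeasurableSet A) (hf : Integrable f)
    {M t y : ℝ≥0} (hM : 0 < M) {ξ : V} (ht : t < M * ‖𝓕 f ξ‖₊ / y) :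
    t / (2 * M) * y < ‖𝓕 (A.indicator f) ξ‖₊ ∨ t / (2 * M) * y < ‖𝓕 (Aᶜ.indicator f) ξ‖₊ := by
  have hy : 0 < y := pos_iff_ne_zero.2 fun h ↦ by simp [h] at ht
  have hsplit : ‖𝓕 f ξ‖₊ ≤ ‖𝓕 (A.indicator f) ξ‖₊ + ‖𝓕 (Aᶜ.indicator f) ξ‖₊ := by
    conv_lhs => rw [← indicator_self_add_compl A f]
    rw [fourier_add_apply (hf.indicator₀ hA) (hf.indicator₀ hA.compl)]
    exact nnnorm_add_le _ _
  by_contra! h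
  refine ((lt_div_iff₀ hy).1 ht).not_ge ?_
  calc
    M * ‖𝓕 f ξ‖₊ ≤ M * (t / (2 * M) * y + t / (2 * M) * y) := by
      gcongr
      exact hsplit.trans (add_le_add h.1 h.2)
    _ = t * y := by field_simp; norm_num

theorem withDensity_sq_mul_lt_fourier_le_lintegral (hφ : AEMeasurable φ) (hf : Integrable f)
    {c : ℝ≥0} (hc : 0 < c) :
    volume.withDensity (fun ξ ↦ (φ ξ : ℝ≥0∞) ^ (2 : ℝ)) {ξ | c * φ ξ < ‖𝓕 f ξ‖₊} ≤
      2 * weakL1Norm volume φ * (c : ℝ≥0∞)⁻¹ * ∫⁻ x, ‖f x‖ₑ := by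
  set D := (∫⁻ x, ‖f x‖ₑ).toNNReal
  have hD : (D : ℝ≥0∞) = ∫⁻ x, ‖f x‖ₑ := ENNReal.coe_toNNReal hf.2.ne
  have hfD (ξ : V) : ‖𝓕 f ξ‖₊ ≤ D :=
    ENNReal.coe_le_coe.1 (hD ▸ enorm_fourier_le_lintegral_enorm f ξ)
  refine (withDensity_rpow_mul_lt_le_weakL1Norm hφ one_lt_two hc hfD).trans_eq ?_
  rw [← hD, ENNReal.coe_div hc.ne', show (2 : ℝ) - 1 = 1 by norm_num, div_one,
    ENNReal.rpow_one, ENNReal.ofReal_ofNat, div_eq_mul_inv]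
  ring

end NormedSpace

variable [InnerProductSpace ℂ H] [CompleteSpace H]

/-- The `L²` Fourier transform is the tempered one, and pairing with a test function moves the
Fourier transform onto it for the tempered and for the integral transform alike. -/
theorem fourier_toLp_ae_eq (hf : Integrable f) (hf₂ : MemLp f 2) :
    (𝓕 (hf₂.toLp f) : Lp H 2 (volume : Measure V)) =ᵐ[volume] 𝓕 f := by
  have hLp : LocallyIntegrable (𝓕 (hf₂.toLp f) : Lp H 2 (volume : Measure V)) volume :=
    (Lp.memLp _).locallyIntegrable one_le_two
  refine ae_eq_of_integral_contDiff_smul_eq hLp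
    (continuous_fourier_of_integrable hf).locallyIntegrable fun g hg hgc ↦ ?_
  have hgc' : HasCompactSupport (Complex.ofRealCLM ∘ g) := hgc.comp_left (map_zero _)
  set G : 𝓢(V, ℂ) := hgc'.toSchwartzMap (Complex.ofRealCLM.contDiff.comp hg)
  have hG (x : V) : G x = (g x : ℂ) := rfl
  have htest := congrArg (fun T ↦ T G) (Lp.fourier_toTemperedDistribution_eq (hf₂.toLp f))
  simp only [TemperedDistribution.fourier_apply, Lp.toTemperedDistribution_apply] at htest
  calc
    _ = ∫ x, G x • (𝓕 (hf₂.toLp f) : Lp H 2 (volume : Measure V)) x := by simp [hG]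
    _ = ∫ x, 𝓕 (⇑G) x • f x := by
      rw [← htest]
      refine integral_congr_ae ?_
      filter_upwards [hf₂.coeFn_toLp] with x hx
      rw [hx, SchwartzMap.fourier_coe]
    _ = ∫ x, G x • 𝓕 f x := by
      simpa using! VectorFourier.integral_fourierIntegral_smul_eq_flip (L := innerₗ V)
        Real.continuous_fourierChar continuous_inner G.integrable hf
    _ = _ := by simp [hG]

theorem lintegral_enorm_fourier_sq_le (hf : Integrable f) :
    ∫⁻ ξ, ‖𝓕 f ξ‖ₑ ^ (2 : ℝ) ≤ ∫⁻ x, ‖f x‖ₑ ^ (2 : ℝ) := by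
  rcases eq_or_ne (∫⁻ x, ‖f x‖ₑ ^ (2 : ℝ)) ∞ with htop | hfin
  · exact htop ▸ le_top
  have hsq {h : V → H} : ∫⁻ x, ‖h x‖ₑ ^ (2 : ℝ) = eLpNorm h 2 volume ^ (2 : ℝ) :=
    (eLpNorm_nnreal_pow_eq_lintegral two_ne_zero).symm
  have hf₂ : MemLp f 2 := ⟨hf.1, by
    rw [hsq] at hfin
    simpa [lt_top_iff_ne_top] using hfin⟩
  have hnorm := Lp.norm_fourier_eq (hf₂.toLp f)
  rw [hsq, hsq, ← eLpNorm_congr_ae (fourier_toLp_ae_eq hf hf₂), ← eLpNorm_congr_ae hf₂.coeFn_toLp,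
    ← Lp.enorm_def, ← Lp.enorm_def, ← ofReal_norm, hnorm, ofReal_norm]

theorem withDensity_sq_mul_lt_fourier_le_lintegral_sq (hφ : AEMeasurable φ) (hf : Integrable f)
    {c : ℝ≥0} (hc : 0 < c) :
    volume.withDensity (fun ξ ↦ (φ ξ : ℝ≥0∞) ^ (2 : ℝ)) {ξ | c * φ ξ < ‖𝓕 f ξ‖₊} ≤
      (c : ℝ≥0∞)⁻¹ ^ (2 : ℝ) * ∫⁻ x, ‖f x‖ₑ ^ (2 : ℝ) := by
  refine (withDensity_rpow_mul_lt_le_lintegral hφ zero_le_two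
    (continuous_fourier_of_integrable hf).nnnorm.aemeasurable hc).trans ?_
  exact mul_le_mul_right (lintegral_enorm_fourier_sq_le hf) _

theorem withDensity_sq_lt_fourier_div_le (hφ : AEMeasurable φ) (hf : Integrable f)
    {M t : ℝ≥0} (hM : 0 < M) (hφM : weakL1Norm volume φ ≤ M) (ht : 0 < t) :
    volume.withDensity (fun ξ ↦ (φ ξ : ℝ≥0∞) ^ (2 : ℝ)) {ξ | t < M * ‖𝓕 f ξ‖₊ / φ ξ} ≤
      4 * (M : ℝ≥0∞) ^ 2 * (t : ℝ≥0∞)⁻¹ * (∫⁻ x in {x | t < ‖f x‖₊}, ‖f x‖ₑ) +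
      4 * (M : ℝ≥0∞) ^ 2 * (t : ℝ≥0∞)⁻¹ ^ 2 * ∫⁻ x in {x | ‖f x‖₊ ≤ t}, ‖f x‖ₑ ^ (2 : ℝ) := by
  set A : Set V := {x | t < ‖f x‖₊}
  have hA : NullMeasurableSet A := nullMeasurableSet_lt aemeasurable_const hf.1.nnnorm.aemeasurable
  have hAc : Aᶜ = {x | ‖f x‖₊ ≤ t} := by ext; simp [A]
  have hc : 0 < t / (2 * M) := by positivity
  have hcinv : ((t / (2 * M) : ℝ≥0) : ℝ≥0∞)⁻¹ = 2 * M * (t : ℝ≥0∞)⁻¹ := by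
    rw [← ENNReal.coe_inv hc.ne', inv_div, ENNReal.coe_div ht.ne', div_eq_mul_inv]
    simp
  calc
    _ ≤ _ := (measure_mono fun ξ hξ ↦ lt_fourier_indicator_of_lt_div hA hf hM hξ).trans
      (measure_union_le _ _)
    _ ≤ 2 * M * (2 * M * (t : ℝ≥0∞)⁻¹) * (∫⁻ x, ‖A.indicator f x‖ₑ) +
        (2 * M * (t : ℝ≥0∞)⁻¹) ^ (2 : ℝ) * ∫⁻ x, ‖Aᶜ.indicator f x‖ₑ ^ (2 : ℝ) := by
      rw [← hcinv]
      gcongr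
      · refine (withDensity_sq_mul_lt_fourier_le_lintegral hφ (hf.indicator₀ hA) hc).trans ?_
        gcongr
      · exact withDensity_sq_mul_lt_fourier_le_lintegral_sq hφ (hf.indicator₀ hA.compl) hc
    _ = _ := by
      have hpow (x : V) : ‖Aᶜ.indicator f x‖ₑ ^ (2 : ℝ) =
          Aᶜ.indicator (fun x ↦ ‖f x‖ₑ ^ (2 : ℝ)) x := by
        by_cases hx : x ∈ Aᶜ <;> simp [hx]
      rw [lintegral_congr hpow, lintegral_congr (enorm_indicator_eq_indicator_enorm f),
        lintegral_indicator₀ hA, lintegral_indicator₀ hA.compl, hAc, ENNReal.rpow_two]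
      ring

/-- Interpolates `f ↦ M * ‖𝓕 f‖ / φ` from `dx` to `φ ^ 2 dξ`; the factor `M` makes both weak type
constants equal to `4 * M ^ 2`. -/
theorem lintegral_enorm_fourier_rpow_mul_rpow_le_of_lt_two (hφ : AEMeasurable φ)
    (hf : Integrable f) {M : ℝ≥0} (hM : 0 < M) (hφM : weakL1Norm volume φ ≤ M) {p : ℝ} (hp : 1 < p)
    (hp₂ : p < 2) :
    ∫⁻ ξ, ‖𝓕 f ξ‖ₑ ^ p * (φ ξ : ℝ≥0∞) ^ (2 - p) ≤
      ENNReal.ofReal p * (4 / ENNReal.ofReal (p - 1) + 4 / ENNReal.ofReal (2 - p)) *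
        (M : ℝ≥0∞) ^ (2 - p) *
        ∫⁻ x, ‖f x‖ₑ ^ p := by
  set ν : Measure V := volume.withDensity fun ξ ↦ (φ ξ : ℝ≥0∞) ^ (2 : ℝ)
  set F : V → ℝ≥0 := fun ξ ↦ M * ‖𝓕 f ξ‖₊ / φ ξ
  have hF : AEMeasurable F :=
    ((continuous_fourier_of_integrable hf).nnnorm.aemeasurable.const_mul M).div hφ
  have hM₀ : (M : ℝ≥0∞) ≠ 0 := by simpa using hM.ne'
  have hpow (ξ : V) : (φ ξ : ℝ≥0∞) ^ (2 : ℝ) * (F ξ : ℝ≥0∞) ^ p =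
      (M : ℝ≥0∞) ^ p * (‖𝓕 f ξ‖ₑ ^ p * (φ ξ : ℝ≥0∞) ^ (2 - p)) := by
    rcases eq_or_ne (φ ξ) 0 with h | h
    · simp [h, hp₂]
    · have h₀ : (φ ξ : ℝ≥0∞) ≠ 0 := by simpa using h
      rw [ENNReal.coe_div h, ENNReal.div_rpow_of_nonneg _ _ (by linarith), ENNReal.coe_mul,
        ENNReal.mul_rpow_of_nonneg _ _ (by linarith), ENNReal.rpow_sub _ _ h₀ ENNReal.coe_ne_top,
        div_eq_mul_inv, div_eq_mul_inv]
      simp only [enorm_eq_nnnorm]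
      ring
  have hmarcinkiewicz := lintegral_rpow_le_of_meas_lt_le hf.1.nnnorm.aemeasurable
    (hF.mono_ac (withDensity_absolutelyContinuous _ _)) (zero_lt_one.trans hp) hp hp₂
    (A := 4 * (M : ℝ≥0∞) ^ 2) (B := 4 * (M : ℝ≥0∞) ^ 2) (ν := ν) (by finiteness) (by finiteness)
    fun t ht ↦ by
      simpa [ν, F, ENNReal.rpow_neg, ENNReal.inv_pow, enorm_eq_nnnorm] using
        withDensity_sq_lt_fourier_div_le hφ hf hM hφM ht
  rw [lintegral_withDensity_eq_lintegral_mul₀ (by fun_prop) (by fun_prop)] at hmarcinkiewicz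
  simp only [Pi.mul_apply, hpow, ← enorm_eq_nnnorm] at hmarcinkiewicz
  rw [lintegral_const_mul' _ _ (by finiteness)] at hmarcinkiewicz
  refine (ENNReal.mul_le_mul_iff_right (by simp [hM₀]) (by finiteness)).1
    (hmarcinkiewicz.trans_eq ?_)
  rw [← ENNReal.rpow_two, ← add_sub_cancel p 2, ENNReal.rpow_add _ _ hM₀ ENNReal.coe_ne_top]
  simp only [div_eq_mul_inv, add_sub_cancel]
  ring

variable (V H) in
theorem paley_inequality {p : ℝ} (hp : 1 < p) (hp₂ : p ≤ 2) :
    ∃ K : ℝ≥0, ∀ (φ : V → ℝ≥0) (f : V → H), AEMeasurable φ → weakL1Norm volume φ ≠ ∞ →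
      Integrable f →
      ∫⁻ ξ, ‖𝓕 f ξ‖ₑ ^ p * (φ ξ : ℝ≥0∞) ^ (2 - p) ≤
        K * weakL1Norm volume φ ^ (2 - p) * ∫⁻ x, ‖f x‖ₑ ^ p := by
  rcases hp₂.eq_or_lt with rfl | hp₂
  · exact ⟨1, fun φ f _ _ hf ↦ by simpa using lintegral_enorm_fourier_sq_le hf⟩
  set K : ℝ≥0∞ := ENNReal.ofReal p * (4 / ENNReal.ofReal (p - 1) + 4 / ENNReal.ofReal (2 - p))
  have hK : K ≠ ∞ := by
    have : 0 < p - 1 := sub_pos.2 hp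
    have : 0 < 2 - p := sub_pos.2 hp₂
    finiteness
  refine ⟨K.toNNReal, fun φ f hφ hφM hf ↦ ?_⟩
  rw [ENNReal.coe_toNNReal hK]
  rcases eq_or_ne (weakL1Norm volume φ) 0 with hM | hM
  · have hzero : ∫⁻ ξ, ‖𝓕 f ξ‖ₑ ^ p * (φ ξ : ℝ≥0∞) ^ (2 - p) = 0 := by
      refine lintegral_eq_zero_of_ae_eq_zero ?_
      filter_upwards [ae_eq_zero_of_weakL1Norm_eq_zero hM] with ξ hξ
      simp [hξ, hp₂]
    exact hzero ▸ zero_le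
  · lift weakL1Norm volume φ to ℝ≥0 using hφM with M hMφ
    exact lintegral_enorm_fourier_rpow_mul_rpow_le_of_lt_two hφ hf
      (pos_iff_ne_zero.2 (by simpa using hM)) hMφ.ge hp hp₂

variable (V H) in
theorem hausdorff_young_inequality {p q : ℝ} (hpq : p.HolderConjugate q) (hp₂ : p ≤ 2) :
    ∃ K : ℝ≥0, ∀ f : V → H, Integrable f →
      eLpNorm (𝓕 f) (ENNReal.ofReal q) volume ≤ K * eLpNorm f (ENNReal.ofReal p) volume := by
  have hp₀ := hpq.pos
  obtain ⟨K, hK⟩ := paley_inequality V H hpq.lt hp₂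
  refine ⟨K ^ p⁻¹, fun f hf ↦ ?_⟩
  have hdual : (∫⁻ ξ, ((‖𝓕 f ξ‖₊ ^ q : ℝ≥0) : ℝ≥0∞)) ^ (p - 1) ≤ K * ∫⁻ x, ‖f x‖ₑ ^ p := by
    refine lintegral_rpow_le_of_forall_weakL1Norm hpq.sub_one_pos (by linarith)
      fun φ hφ hφM ↦ ?_
    convert! hK φ f hφ.aemeasurable hφM hf using 1
    · refine lintegral_congr fun ξ ↦ ?_
      rw [ENNReal.coe_rpow_of_nonneg _ hpq.symm.nonneg, ← ENNReal.rpow_mul, mul_comm q,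
        hpq.sub_one_mul_conj, enorm_eq_nnnorm]
      ring_nf
    · ring_nf
  simp only [ENNReal.coe_rpow_of_nonneg _ hpq.symm.nonneg, ← enorm_eq_nnnorm] at hdual
  rw [lintegral_enorm_rpow_eq_eLpNorm_rpow _ hpq.symm.pos, ← ENNReal.rpow_mul, mul_comm q,
    hpq.sub_one_mul_conj, lintegral_enorm_rpow_eq_eLpNorm_rpow _ hp₀] at hdual
  rw [← ENNReal.rpow_le_rpow_iff hp₀, ENNReal.mul_rpow_of_nonneg _ _ hp₀.le,
    ENNReal.coe_rpow_of_nonneg _ (inv_nonneg.2 hp₀.le), ENNReal.rpow_inv_rpow hp₀.ne']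
  exact hdual

theorem stmt_10_general {p q b : ℝ} (hpq : p.HolderConjugate q) (hpb : p ≤ b) (hbq : b ≤ q) :
    ∃ K : ℝ≥0∞, 0 < K ∧ K ≠ ∞ ∧ ∀ φ : V → ℝ≥0, AEMeasurable φ → weakL1Norm volume φ ≠ ∞ →
      ∀ f : V → H, Integrable f →
        (∫⁻ ξ, (‖𝓕 f ξ‖ₑ * (φ ξ : ℝ≥0∞) ^ (1 / b - 1 / q)) ^ b) ^ (1 / b) ≤
          K * weakL1Norm volume φ ^ (1 / b - 1 / q) * eLpNorm f (ENNReal.ofReal p) volume := by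
  have hp₀ := hpq.pos
  have hq₀ := hpq.symm.pos
  have hb₀ : 0 < b := hp₀.trans_le hpb
  have hp₂ : p ≤ 2 := le_two_of_holderConjugate_of_le hpq (hpb.trans hbq)
  obtain ⟨K₁, hpaley⟩ := paley_inequality V H hpq.lt hp₂
  obtain ⟨K₂, hyoung⟩ := hausdorff_young_inequality V H hpq hp₂
  obtain ⟨θ, η, hθ, hη, hθη, hθηb, hθb⟩ := exists_interpolation_exponents hpq hpb hbq
  refine ⟨((K₁ : ℝ≥0∞) ^ θ * (K₂ : ℝ≥0∞) ^ (q * η)) ^ (1 / b) + 1, by positivity, ?_,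
    fun φ hφ hφM f hf ↦ ?_⟩
  · finiteness
  set M := weakL1Norm volume φ
  set N := eLpNorm f (ENNReal.ofReal p) volume
  calc
    _ ≤ ((∫⁻ ξ, ‖𝓕 f ξ‖ₑ ^ p * (φ ξ : ℝ≥0∞) ^ (2 - p)) ^ θ *
          (∫⁻ ξ, ‖𝓕 f ξ‖ₑ ^ q) ^ η) ^ (1 / b) := by
      gcongr
      exact lintegral_mul_rpow_rpow_le (continuous_fourier_of_integrable hf).enorm.aemeasurable
        hφ.coe_nnreal_ennreal hp₀.le hq₀.le hθ hη hθη hθηb hθb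
    _ ≤ ((K₁ * M ^ (2 - p) * N ^ p) ^ θ * ((K₂ * N) ^ q) ^ η) ^ (1 / b) := by
      rw [lintegral_enorm_rpow_eq_eLpNorm_rpow _ hq₀]
      gcongr
      · exact (hpaley φ f hφ hφM hf).trans_eq
          (by rw [lintegral_enorm_rpow_eq_eLpNorm_rpow _ hp₀])
      · exact hyoung f hf
    _ = (((K₁ : ℝ≥0∞) ^ θ * (K₂ : ℝ≥0∞) ^ (q * η)) * (M ^ (1 / b - 1 / q) * N) ^ b) ^ (1 / b) := by
      rw [ENNReal.mul_rpow_of_nonneg _ _ hb₀.le, ← ENNReal.rpow_mul M, ← hθb, ← hθηb,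
        ENNReal.rpow_add_of_nonneg _ _ (by positivity) (by positivity)]
      simp only [ENNReal.mul_rpow_of_nonneg _ _ hθ, ENNReal.mul_rpow_of_nonneg _ _ hη,
        ENNReal.mul_rpow_of_nonneg _ _ hq₀.le, ← ENNReal.rpow_mul]
      congr 1
      ring
    _ ≤ _ := by
      rw [ENNReal.mul_rpow_of_nonneg _ _ (by positivity), one_div, ENNReal.rpow_rpow_inv hb₀.ne',
        ← mul_assoc]
      gcongr
      exact le_self_add

end Fourier

/-- Hausdorff–Young–Paley inequality on `ℝⁿ`: let `1 < p ≤ b ≤ p' < ∞` with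
`1/p + 1/p' = 1`. Then there is a constant `K` (depending only on `p, b, n`) such that
for every measurable `φ > 0` with `M_φ = sup_{s>0} s |{ξ : φ ξ ≥ s}| < ∞` and every `f`,
`(∫ (|f̂(ξ)| φ(ξ)^{1/b - 1/p'})^b dξ)^{1/b} ≤ K · M_φ^{1/b - 1/p'} ‖f‖_{L^p}`. -/
theorem stmt_10 (n : ℕ) (p p' b : ℝ) (hp : 1 < p) (hpb : p ≤ b) (hbp' : b ≤ p')
    (hp' : 1/p + 1/p' = 1) :
    ∃ K : ℝ≥0∞, 0 < K ∧ K ≠ ⊤ ∧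
      ∀ φ : EuclideanSpace ℝ (Fin n) → ℝ, Measurable φ → (∀ ξ, 0 < φ ξ) →
        ∀ Mφ : ℝ≥0∞, Mφ ≠ ⊤ →
          (∀ s : ℝ, 0 < s →
            ENNReal.ofReal s * volume {ξ : EuclideanSpace ℝ (Fin n) | s ≤ φ ξ} ≤ Mφ) →
          ∀ f : 𝓢(EuclideanSpace ℝ (Fin n), ℂ),
            (∫⁻ ξ, ((‖𝓕 (⇑f) ξ‖₊ : ℝ≥0∞) *
                ENNReal.ofReal (φ ξ) ^ (1/b - 1/p')) ^ b) ^ (1/b) ≤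
              K * Mφ ^ (1/b - 1/p') * eLpNorm (⇑f) (ENNReal.ofReal p) volume := by
  have hpq : p.HolderConjugate p' := Real.holderConjugate_iff.2 ⟨hp, by simpa using hp'⟩
  have hexp : 0 ≤ 1 / b - 1 / p' :=
    sub_nonneg.2 (one_div_le_one_div_of_le (hpq.pos.trans_le hpb) hbp')
  obtain ⟨K, hK₀, hK, hineq⟩ :=
    stmt_10_general (V := EuclideanSpace ℝ (Fin n)) (H := ℂ) hpq hpb hbp'
  refine ⟨K, hK₀, hK, fun φ hφ _ Mφ hMφ hweak f ↦ ?_⟩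
  have hnorm : weakL1Norm volume (fun ξ ↦ (φ ξ).toNNReal) ≤ Mφ := by
    refine iSup_le fun s ↦ ?_
    rcases eq_zero_or_pos s with rfl | hs
    · simp
    · simpa [Real.le_toNNReal_iff_coe_le', hs] using hweak s hs
  have hfinite : weakL1Norm volume (fun ξ ↦ (φ ξ).toNNReal) ≠ ∞ := (hnorm.trans_lt hMφ.lt_top).ne
  refine (hineq _ hφ.real_toNNReal.aemeasurable hfinite f f.integrable).trans ?_
  gcongr
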